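/- Let k be a commutative ring with unity, N ≥ 2 an integer, q ∈ k a primitive N-th root of unity, U and V k-modules, and d_U, d_V k-linear endomorphisms of U and V respectively. For each s ∈ ℤ define the k-linear operator D_s on Hom_k(U,V) by D_s(g) = d_V∘g − q^s·(g∘d_U). Then for every r ∈ ℤ, every integer n with 1 ≤ n ≤ N, and every f ∈ Hom_k(U,V): (D_{r+n−1}∘⋯∘D_{r+1}∘D_r)(f) = Σ_{l=0}^{n} (−1)^l · q^{lr + l(l−1)/2} · [n choose l] · d_V^{n−l}∘f∘d_U^{l}. (This computes the n-th iterated differential of the Hom-complex Hom^{•q}(U,V) applied to a homogeneous morphism f of degree r.) -/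

import Mathlib

/-- The `q`-integer `[m] = 1 + q + ⋯ + q^{m-1}`. -/
def qInt {k : Type*} [CommRing k] (q : k) (m : ℕ) : k := ∑ i ∈ Finset.range m, q ^ i

/-- The `q`-factorial `[m]! = [m][m-1]⋯[1]`, with `[0]! = 1`. -/
def qFact {k : Type*} [CommRing k] (q : k) (m : ℕ) : k := ∏ i ∈ Finset.range m, qInt q (i + 1)

/-- `QBinomSpec q N m l c` says that `c` is *the* `q`-binomial coefficient `[m choose l]`
(for `0 ≤ l ≤ m ≤ N`): in the special cases `(l,m) = (0,N), (N,N)` it is `1` by convention,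
and otherwise it is characterized by `[l]! ⬝ [m-l]! ⬝ c = [m]!`. -/
def QBinomSpec {k : Type*} [CommRing k] (q : k) (N m l : ℕ) (c : k) : Prop :=
  ((m = N ∧ (l = 0 ∨ l = N)) → c = 1) ∧
  (¬(m = N ∧ (l = 0 ∨ l = N)) → qFact q l * qFact q (m - l) * c = qFact q m)

/-- The differential of the Hom-complex `Hom^{•q}(U,V)` in degree `s`:
`D_s(g) = d_V ∘ g − q^s ⬝ (g ∘ d_U)`, where `q = ↑u` is a unit (so `q^s` makes sense
for `s : ℤ`). -/
def homDiff {k : Type*} [CommRing k] {U V : Type*} [AddCommGroup U] [AddCommGroup V]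
    [Module k U] [Module k V] (u : kˣ) (dU : U →ₗ[k] U) (dV : V →ₗ[k] V)
    (s : ℤ) (g : U →ₗ[k] V) : U →ₗ[k] V :=
  dV ∘ₗ g - ((u ^ s : kˣ) : k) • (g ∘ₗ dU)

/-!
Post-composition with `d_V` and pre-composition with `d_U` are commuting endomorphisms `x` and `z`
of `Hom(U, V)`, and `D_{r+i} = x + q^i y` with `y = -q^r z`. The iterated differential is therefore
the product `∏ (x + q^i y)` over `i < n`, which Gauss's `q`-binomial theorem expands with Gaussian
binomials, given by the `q`-Pascal rule, as coefficients. Gaussian binomials satisfy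
`[l]! [m-l]! c = [m]!`, and this determines `c` because `[j]!` is a non-zero-divisor for `j < N`.
-/

section GaussBinom

/-- The Gaussian binomial coefficient `[m choose l]`, as a polynomial expression in `q`. It is
defined by the `q`-Pascal rule rather than as a quotient of `q`-factorials, so that it makes sense
for every `q`; it vanishes for `l > m`. -/
def gaussBinom {R : Type*} [Semiring R] (q : R) : ℕ → ℕ → R
  | _, 0 => 1
  | 0, _ + 1 => 0
  | m + 1, l + 1 => q ^ (l + 1) * gaussBinom q m (l + 1) + gaussBinom q m l

section Semiring

variable {R : Type*} [Semiring R] (q : R)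

@[simp]
theorem gaussBinom_zero_right (m : ℕ) : gaussBinom q m 0 = 1 := by
  cases m <;> rfl

theorem gaussBinom_succ_succ (m l : ℕ) :
    gaussBinom q (m + 1) (l + 1) = q ^ (l + 1) * gaussBinom q m (l + 1) + gaussBinom q m l :=
  rfl

theorem gaussBinom_eq_zero_of_lt {m l : ℕ} (h : m < l) : gaussBinom q m l = 0 := by
  induction m generalizing l with
  | zero =>
    obtain ⟨l, rfl⟩ := Nat.exists_eq_add_of_lt h
    rfl
  | succ m ih =>
    obtain ⟨l, rfl⟩ := Nat.exists_eq_add_one_of_ne_zero (Nat.ne_zero_of_lt h)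
    rw [gaussBinom_succ_succ, ih (by lia), ih (by lia), mul_zero, add_zero]

@[simp]
theorem gaussBinom_self (m : ℕ) : gaussBinom q m m = 1 := by
  induction m with
  | zero => rfl
  | succ m ih =>
    rw [gaussBinom_succ_succ, gaussBinom_eq_zero_of_lt q m.lt_succ_self, ih, mul_zero, zero_add]

end Semiring

theorem pow_choose_two_succ {M : Type*} [Monoid M] (q : M) (l : ℕ) :
    q ^ (l + 1).choose 2 = q ^ l.choose 2 * q ^ l := by
  rw [Nat.choose_succ_succ' l 1, Nat.choose_one_right, ← pow_add, add_comm]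

theorem sum_range_gaussBinom_succ_smul {R M : Type*} [Semiring R] [AddCommMonoid M] [Module R M]
    (q : R) (n : ℕ) (z : ℕ → M) :
    ∑ l ∈ Finset.range (n + 2), (q ^ l.choose 2 * gaussBinom q (n + 1) l) • z l =
      ∑ l ∈ Finset.range (n + 1), (q ^ l.choose 2 * q ^ l * gaussBinom q n l) • z l +
        ∑ l ∈ Finset.range (n + 1), (q ^ (l + 1).choose 2 * gaussBinom q n l) • z (l + 1) := by
  have extend_sum :
      ∑ l ∈ Finset.range (n + 1), (q ^ l.choose 2 * q ^ l * gaussBinom q n l) • z l =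
        ∑ l ∈ Finset.range (n + 2), (q ^ l.choose 2 * q ^ l * gaussBinom q n l) • z l := by
    rw [Finset.sum_range_succ _ (n + 1), gaussBinom_eq_zero_of_lt q n.lt_succ_self, mul_zero,
      zero_smul, add_zero]
  rw [extend_sum, Finset.sum_range_succ', Finset.sum_range_succ' _ (n + 1), add_right_comm,
    ← Finset.sum_add_distrib]
  simp only [gaussBinom_succ_succ, gaussBinom_zero_right, mul_add, add_smul, mul_assoc, pow_zero,
    one_mul]

theorem list_prod_add_pow_smul_eq_sum_gaussBinom {R A : Type*} [CommSemiring R] [Semiring A]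
    [Algebra R A] (q : R) {x y : A} (h : Commute x y) (n : ℕ) :
    ((List.range n).map fun i ↦ x + q ^ i • y).prod =
      ∑ l ∈ Finset.range (n + 1),
        (q ^ l.choose 2 * gaussBinom q n l) • (x ^ (n - l) * y ^ l) := by
  induction n generalizing y with
  | zero => simp
  | succ n ih =>
    -- The factors other than the first, `x + y`, form the product for `x` and `q • y`.
    have prod_succ : ((List.range (n + 1)).map fun i ↦ x + q ^ i • y).prod =
        (x + y) * ((List.range n).map fun i ↦ x + q ^ i • q • y).prod := by
      simp [List.range_succ_eq_map, Function.comp_def, pow_succ, mul_smul]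
    have term_smul (l : ℕ) :
        (q ^ l.choose 2 * gaussBinom q n l) • (x ^ (n - l) * (q • y) ^ l) =
          (q ^ l.choose 2 * q ^ l * gaussBinom q n l) • (x ^ (n - l) * y ^ l) := by
      rw [smul_pow, mul_smul_comm, smul_smul, mul_right_comm]
    have x_mul (l : ℕ) (hl : l ∈ Finset.range (n + 1)) :
        x * (x ^ (n - l) * y ^ l) = x ^ (n + 1 - l) * y ^ l := by
      rw [Nat.sub_add_comm (Finset.mem_range_succ_iff.1 hl), pow_succ', mul_assoc]
    have y_mul (l : ℕ) :
        y * (x ^ (n - l) * y ^ l) = x ^ (n + 1 - (l + 1)) * y ^ (l + 1) := by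
      rw [Nat.add_sub_add_right, ← mul_assoc, ← (h.pow_left _).eq, mul_assoc, ← pow_succ']
    rw [prod_succ, ih (h.smul_right q), sum_range_gaussBinom_succ_smul, add_mul, Finset.mul_sum,
      Finset.mul_sum]
    congr 1 <;> refine Finset.sum_congr rfl fun l hl ↦ ?_
    · rw [term_smul, mul_smul_comm, x_mul l hl]
    · rw [term_smul, mul_smul_comm, y_mul, pow_choose_two_succ]

end GaussBinom

section QFactorial

variable {k : Type*} [CommRing k] (q : k)

@[simp]
theorem qFact_zero : qFact q 0 = 1 :=
  Finset.prod_range_zero _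

theorem qFact_succ (m : ℕ) : qFact q (m + 1) = qFact q m * qInt q (m + 1) :=
  Finset.prod_range_succ _ m

theorem qInt_add (l m : ℕ) : qInt q (l + m) = qInt q l + q ^ l * qInt q m := by
  simp only [qInt, Finset.sum_range_add, Finset.mul_sum, pow_add]

theorem qFact_mul_qFact_mul_gaussBinom :
    ∀ l m : ℕ, qFact q l * qFact q m * gaussBinom q (l + m) l = qFact q (l + m)
  | 0, m => by simp
  | l + 1, 0 => by simp
  | l + 1, m + 1 => by
    have left := qFact_mul_qFact_mul_gaussBinom (l + 1) m
    have right := qFact_mul_qFact_mul_gaussBinom l (m + 1)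
    rw [show l + 1 + m = l + m + 1 by ring, qFact_succ q l] at left
    rw [← add_assoc, qFact_succ q m] at right
    rw [show l + 1 + (m + 1) = l + m + 1 + 1 by ring, gaussBinom_succ_succ,
      qFact_succ q (l + m + 1), show l + m + 1 + 1 = (l + 1) + (m + 1) by ring, qInt_add,
      qFact_succ q l, qFact_succ q m]
    linear_combination q ^ (l + 1) * qInt q (m + 1) * left + qInt q (l + 1) * right

variable {q}

theorem qInt_mem_nonZeroDivisors {m : ℕ} (h : q ^ m - 1 ∈ nonZeroDivisors k) :
    qInt q m ∈ nonZeroDivisors k := by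
  rw [← geom_sum_mul, mul_mem_nonZeroDivisors] at h
  exact h.1

theorem qFact_mem_nonZeroDivisors {m : ℕ}
    (h : ∀ l, 1 ≤ l → l ≤ m → q ^ l - 1 ∈ nonZeroDivisors k) :
    qFact q m ∈ nonZeroDivisors k :=
  prod_mem fun i hi ↦
    qInt_mem_nonZeroDivisors (h (i + 1) (Nat.le_add_left 1 i) (Finset.mem_range.1 hi))

theorem QBinomSpec.eq_gaussBinom {N m l : ℕ} {c : k} (hc : QBinomSpec q N m l c)
    (hq : ∀ i, 1 ≤ i → i ≤ N - 1 → q ^ i - 1 ∈ nonZeroDivisors k) (hm : m ≤ N) (hl : l ≤ m) :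
    c = gaussBinom q m l := by
  by_cases h : m = N ∧ (l = 0 ∨ l = N)
  · rw [hc.1 h]
    obtain ⟨rfl, rfl | rfl⟩ := h <;> simp
  · have qFact_mem {j : ℕ} (hj : j < N) : qFact q j ∈ nonZeroDivisors k :=
      qFact_mem_nonZeroDivisors fun i hi hij ↦ hq i hi (by lia)
    have mem := mul_mem (qFact_mem (j := l) (by lia)) (qFact_mem (j := m - l) (by lia))
    have gauss := qFact_mul_qFact_mul_gaussBinom q l (m - l)
    rw [Nat.add_sub_cancel' hl] at gauss
    exact (mul_cancel_left_mem_nonZeroDivisors mem).1 ((hc.2 h).trans gauss.symm)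

end QFactorial

section CommutingFactors

theorem list_foldl_smul_eq_prod_smul {ι M α : Type*} [Monoid M] [MulAction M α] (φ : ι → M)
    {L : List ι} (h : L.Pairwise fun i j ↦ Commute (φ i) (φ j)) (a : α) :
    L.foldl (fun b i ↦ φ i • b) a = (L.map φ).prod • a := by
  induction h generalizing a with
  | nil => simp
  | cons head _ ih =>
    rw [List.foldl_cons, ih, List.map_cons, List.prod_cons, smul_smul,
      (Commute.list_prod_right _ _ (List.forall_mem_map.2 head)).eq]

theorem commute_add_smul_add_smul {R A : Type*} [CommSemiring R] [Semiring A] [Algebra R A]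
    {x y : A} (h : Commute x y) (a b : R) : Commute (x + a • y) (x + b • y) :=
  ((Commute.refl x).add_right (h.smul_right b)).add_left
    ((h.symm.add_right ((Commute.refl y).smul_right b)).smul_left a)

end CommutingFactors

section Composition

variable {R M M' : Type*} [CommSemiring R] [AddCommMonoid M] [AddCommMonoid M'] [Module R M]
  [Module R M']

theorem compRight_pow_apply (φ : M' →ₗ[R] M') (n : ℕ) (f : M →ₗ[R] M') :
    ((φ.compRight R : Module.End R (M →ₗ[R] M')) ^ n) f = (φ ^ n) ∘ₗ f := by
  induction n with
  | zero => rfl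
  | succ n ih =>
    rw [pow_succ', pow_succ', Module.End.mul_apply, ih, LinearMap.compRight_apply,
      Module.End.mul_eq_comp, LinearMap.comp_assoc]

theorem lcomp_pow_apply (φ : M →ₗ[R] M) (n : ℕ) (f : M →ₗ[R] M') :
    ((LinearMap.lcomp R M' φ : Module.End R (M →ₗ[R] M')) ^ n) f = f ∘ₗ (φ ^ n) := by
  induction n with
  | zero => rfl
  | succ n ih =>
    rw [pow_succ', pow_succ, Module.End.mul_apply, ih, LinearMap.lcomp_apply',
      Module.End.mul_eq_comp, LinearMap.comp_assoc]

theorem commute_compRight_lcomp (φ : M →ₗ[R] M) (ψ : M' →ₗ[R] M') :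
    Commute (ψ.compRight R : Module.End R (M →ₗ[R] M')) (LinearMap.lcomp R M' φ) :=
  LinearMap.ext fun f ↦ (LinearMap.comp_assoc φ f ψ).symm

end Composition

section HomDiff

variable {k : Type*} [CommRing k] {U V : Type*} [AddCommGroup U] [AddCommGroup V]
  [Module k U] [Module k V]
  (u : kˣ) (dU : U →ₗ[k] U) (dV : V →ₗ[k] V) (r : ℤ)

theorem homDiff_add_natCast (i : ℕ) (g : U →ₗ[k] V) :
    homDiff u dU dV (r + i) g =
      (dV.compRight k + (u : k) ^ i • (-((u ^ r : kˣ) : k)) • LinearMap.lcomp k V dU :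
        Module.End k (U →ₗ[k] V)) • g := by
  have zpow_add_natCast : ((u ^ (r + i) : kˣ) : k) = (u : k) ^ i * ((u ^ r : kˣ) : k) := by
    rw [zpow_add, zpow_natCast, mul_comm, Units.val_mul, Units.val_pow_eq_pow_val]
  simp [homDiff, zpow_add_natCast, mul_smul, sub_eq_add_neg, LinearMap.lcomp_apply']

theorem homDiff_iterate_eq_general (n : ℕ) (f : U →ₗ[k] V) :
    (List.range n).foldl (fun g i ↦ homDiff u dU dV (r + (i : ℤ)) g) f =
      ∑ l ∈ Finset.range (n + 1),
        ((-1 : k) ^ l * ((u ^ ((l : ℤ) * r) : kˣ) : k) * (u : k) ^ (l * (l - 1) / 2) *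
          gaussBinom (u : k) n l) • ((dV ^ (n - l)) ∘ₗ f ∘ₗ (dU ^ l)) := by
  let x : Module.End k (U →ₗ[k] V) := dV.compRight k
  let z : Module.End k (U →ₗ[k] V) := LinearMap.lcomp k V dU
  let y := (-((u ^ r : kˣ) : k)) • z
  have comm : Commute x y := (commute_compRight_lcomp dU dV).smul_right _
  -- The fold runs over `List.range n` coerced to a `List ℤ`, which elaborates to a monadic bind.
  rw [bind_pure_comp, List.map_eq_map, List.foldl_map]
  simp only [homDiff_add_natCast]
  rw [list_foldl_smul_eq_prod_smul (fun i ↦ x + (u : k) ^ i • y)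
      (List.pairwise_of_forall fun _ _ ↦ commute_add_smul_add_smul comm _ _),
    list_prod_add_pow_smul_eq_sum_gaussBinom _ comm, Finset.sum_smul]
  refine Finset.sum_congr rfl fun l _ ↦ ?_
  have coeff : ((u : k) ^ l.choose 2 * gaussBinom (u : k) n l) * (-((u ^ r : kˣ) : k)) ^ l =
      (-1 : k) ^ l * ((u ^ ((l : ℤ) * r) : kˣ) : k) * (u : k) ^ (l * (l - 1) / 2) *
          gaussBinom (u : k) n l := by
    rw [Nat.choose_two_right, neg_pow, mul_comm (l : ℤ), zpow_mul, zpow_natCast,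
      Units.val_pow_eq_pow_val]
    ring
  rw [← coeff, smul_pow, mul_smul_comm, smul_smul, Module.End.smul_def, LinearMap.smul_apply,
    Module.End.mul_apply, lcomp_pow_apply, compRight_pow_apply]

end HomDiff

/-- for a homogeneous morphism `f` of degree `r` and `1 ≤ n ≤ N`,
`(D_{r+n−1}∘⋯∘D_{r+1}∘D_r)(f) = Σ_{l=0}^{n} (−1)^l ⬝ q^{lr + l(l−1)/2} ⬝ [n choose l] ⬝
d_V^{n−l}∘f∘d_U^{l}`. -/
theorem homDiff_iterate_eq
    {k : Type*} [CommRing k] (N : ℕ) (hN : 2 ≤ N) (q : k)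
    (hq1 : q ^ N = 1)
    (hq2 : ∀ l : ℕ, 1 ≤ l → l ≤ N - 1 → q ^ l - 1 ∈ nonZeroDivisors k)
    (u : kˣ) (hu : (u : k) = q)
    {U V : Type*} [AddCommGroup U] [AddCommGroup V] [Module k U] [Module k V]
    (dU : U →ₗ[k] U) (dV : V →ₗ[k] V)
    (r : ℤ) (n : ℕ) (hn1 : 1 ≤ n) (hnN : n ≤ N)
    (c : ℕ → k) (hc : ∀ l ≤ n, QBinomSpec q N n l (c l))
    (f : U →ₗ[k] V) :
    (List.range n).foldl (fun g i => homDiff u dU dV (r + (i : ℤ)) g) f =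
      ∑ l ∈ Finset.range (n + 1),
        ((-1 : k) ^ l * ((u ^ ((l : ℤ) * r) : kˣ) : k) * q ^ (l * (l - 1) / 2) * c l) •
          ((dV ^ (n - l)) ∘ₗ f ∘ₗ (dU ^ l)) := by
  subst hu
  rw [homDiff_iterate_eq_general]
  exact Finset.sum_congr rfl fun l hl ↦ by rw [(hc l (by grind)).eq_gaussBinom hq2 hnN (by grind)]
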